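/- The function W^2(r) = ((r^4-α^4)^{n+1} - (1-α^4)^{n+1})/(r^4(r^4-α^4)^n) is strictly increasing in r on (1,∞) for 0 ≤ α < 1 and n ∈ ℕ, and satisfies 0 < W^2(r) < 1 there. -/

import Mathlib

/-!
In the variable `x = r⁴`, with `a = α⁴` and `b = 1`, the function `W²` factors as
`(1 - a / x) * (1 - ((b - a) / (x - a)) ^ (n + 1))`. For `0 ≤ a < b` both factors are nonnegative
on `(b, ∞)`, the first is increasing and the second strictly increasing.
-/

section OrderedField

variable {𝕜 : Type*} [Field 𝕜]

/-- The function `W²` of the paper in the variable `x = r⁴`, with parameters `a` in place of `α⁴`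
and `b` in place of the left endpoint `1`. -/
def wSq (n : ℕ) (a b x : 𝕜) : 𝕜 :=
  ((x - a) ^ (n + 1) - (b - a) ^ (n + 1)) / (x * (x - a) ^ n)

theorem wSq_eq_mul (n : ℕ) {a x : 𝕜} (b : 𝕜) (hx : x ≠ 0) (hxa : x - a ≠ 0) :
    wSq n a b x = (1 - a / x) * (1 - ((b - a) / (x - a)) ^ (n + 1)) := by
  rw [wSq, div_pow]
  field_simp
  ring

variable [LinearOrder 𝕜] [IsStrictOrderedRing 𝕜] {a b c x : 𝕜}

theorem monotoneOn_one_sub_div (ha : 0 ≤ a) : MonotoneOn (fun x ↦ 1 - a / x) (Set.Ioi 0) :=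
  fun _ hx _ _ hxy ↦ sub_le_sub_left (div_le_div_of_nonneg_left ha hx hxy) 1

theorem strictAntiOn_div_sub_pow (a : 𝕜) (hc : 0 < c) {m : ℕ} (hm : m ≠ 0) :
    StrictAntiOn (fun x ↦ (c / (x - a)) ^ m) (Set.Ioi a) := by
  intro x hx y hy hxy
  have hxa : 0 < x - a := sub_pos.2 hx
  have hya : 0 < y - a := sub_pos.2 hy
  have hdiv : c / (y - a) < c / (x - a) :=
    div_lt_div_of_pos_left hc hxa (sub_lt_sub_right hxy a)
  exact pow_lt_pow_left₀ hdiv (div_pos hc hya).le hm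

theorem wSq_pos (n : ℕ) (hab : a ≤ b) (hbx : b < x) (hx : 0 < x) : 0 < wSq n a b x := by
  have hxa : 0 < x - a := sub_pos.2 (hab.trans_lt hbx)
  have hpow : (b - a) ^ (n + 1) < (x - a) ^ (n + 1) :=
    pow_lt_pow_left₀ (sub_lt_sub_right hbx a) (sub_nonneg.2 hab) n.succ_ne_zero
  exact div_pos (sub_pos.2 hpow) (mul_pos hx (pow_pos hxa n))

theorem wSq_lt_one (n : ℕ) (ha : 0 ≤ a) (hab : a < b) (hax : a < x) : wSq n a b x < 1 := by
  have hxa : 0 < x - a := sub_pos.2 hax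
  rw [wSq, div_lt_one (mul_pos (ha.trans_lt hax) (pow_pos hxa n))]
  calc (x - a) ^ (n + 1) - (b - a) ^ (n + 1)
      < (x - a) ^ (n + 1) := sub_lt_self _ (pow_pos (sub_pos.2 hab) _)
    _ = (x - a) * (x - a) ^ n := pow_succ' _ _
    _ ≤ x * (x - a) ^ n := by gcongr; exact sub_le_self x ha

theorem strictMonoOn_wSq (n : ℕ) (ha : 0 ≤ a) (hab : a < b) :
    StrictMonoOn (wSq n a b) (Set.Ioi b) := by
  intro x hx y hy hxy
  have hax : a < x := hab.trans hx
  have hay : a < y := hab.trans hy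
  have hx₀ : 0 < x := ha.trans_lt hax
  have hy₀ : 0 < y := ha.trans_lt hay
  have hb : 0 < b - a := sub_pos.2 hab
  have hleft : 1 - a / x ≤ 1 - a / y := monotoneOn_one_sub_div ha hx₀ hy₀ hxy.le
  have hright : 1 - ((b - a) / (x - a)) ^ (n + 1) < 1 - ((b - a) / (y - a)) ^ (n + 1) :=
    sub_lt_sub_left (strictAntiOn_div_sub_pow a hb n.succ_ne_zero hax hay hxy) 1
  have hleft_pos : 0 < 1 - a / x := sub_pos.2 ((div_lt_one hx₀).2 hax)
  have hright_pos : 0 < 1 - ((b - a) / (y - a)) ^ (n + 1) := by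
    have hya : 0 < y - a := sub_pos.2 hay
    have hlt : (b - a) / (y - a) < 1 := (div_lt_one hya).2 (sub_lt_sub_right hy a)
    exact sub_pos.2 (pow_lt_one₀ (div_pos hb hya).le hlt n.succ_ne_zero)
  rw [wSq_eq_mul n b hx₀.ne' (sub_pos.2 hax).ne', wSq_eq_mul n b hy₀.ne' (sub_pos.2 hay).ne']
  calc (1 - a / x) * (1 - ((b - a) / (x - a)) ^ (n + 1))
      < (1 - a / x) * (1 - ((b - a) / (y - a)) ^ (n + 1)) :=
        mul_lt_mul_of_pos_left hright hleft_pos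
    _ ≤ (1 - a / y) * (1 - ((b - a) / (y - a)) ^ (n + 1)) :=
        mul_le_mul_of_nonneg_right hleft hright_pos.le

theorem stmt_9_general (n : ℕ) {α : 𝕜} (hα : |α| < 1) :
    StrictMonoOn
      (fun r : 𝕜 => ((r ^ 4 - α ^ 4) ^ (n + 1) - (1 - α ^ 4) ^ (n + 1)) /
        (r ^ 4 * (r ^ 4 - α ^ 4) ^ n)) (Set.Ioi 1) ∧
    ∀ r : 𝕜, 1 < r →
      0 < ((r ^ 4 - α ^ 4) ^ (n + 1) - (1 - α ^ 4) ^ (n + 1)) /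
          (r ^ 4 * (r ^ 4 - α ^ 4) ^ n) ∧
      ((r ^ 4 - α ^ 4) ^ (n + 1) - (1 - α ^ 4) ^ (n + 1)) /
          (r ^ 4 * (r ^ 4 - α ^ 4) ^ n) < 1 := by
  have hfour : Even 4 := ⟨2, rfl⟩
  have hα₀ : 0 ≤ α ^ 4 := hfour.pow_nonneg α
  have hα₁ : α ^ 4 < 1 := hfour.pow_abs α ▸ pow_lt_one₀ (abs_nonneg α) hα four_ne_zero
  have hmaps : Set.MapsTo (fun r : 𝕜 ↦ r ^ 4) (Set.Ioi 1) (Set.Ioi 1) :=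
    fun _ hr ↦ one_lt_pow₀ hr four_ne_zero
  have hpow : StrictMonoOn (fun r : 𝕜 ↦ r ^ 4) (Set.Ioi 1) :=
    (pow_left_strictMonoOn₀ four_ne_zero).mono fun _ hr ↦ zero_le_one.trans (le_of_lt hr)
  refine ⟨(strictMonoOn_wSq n hα₀ hα₁).comp hpow hmaps, fun r hr ↦ ?_⟩
  have hr₄ : 1 < r ^ 4 := hmaps hr
  exact ⟨wSq_pos n hα₁.le hr₄ (zero_lt_one.trans hr₄), wSq_lt_one n hα₀ hα₁ (hα₁.trans hr₄)⟩

end OrderedField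

/-- For `0 ≤ α < 1` and `n ∈ ℕ`, the function
`W²(r) = ((r⁴-α⁴)^(n+1) - (1-α⁴)^(n+1))/(r⁴(r⁴-α⁴)ⁿ)` is strictly increasing in `r`
on `(1,∞)` and satisfies `0 < W²(r) < 1` there. -/
theorem stmt_9 (n : ℕ) (α : ℝ) (hα0 : 0 ≤ α) (hα1 : α < 1) :
    StrictMonoOn
      (fun r : ℝ => ((r ^ 4 - α ^ 4) ^ (n + 1) - (1 - α ^ 4) ^ (n + 1)) /
        (r ^ 4 * (r ^ 4 - α ^ 4) ^ n)) (Set.Ioi 1) ∧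
    ∀ r : ℝ, 1 < r →
      0 < ((r ^ 4 - α ^ 4) ^ (n + 1) - (1 - α ^ 4) ^ (n + 1)) /
          (r ^ 4 * (r ^ 4 - α ^ 4) ^ n) ∧
      ((r ^ 4 - α ^ 4) ^ (n + 1) - (1 - α ^ 4) ^ (n + 1)) /
          (r ^ 4 * (r ^ 4 - α ^ 4) ^ n) < 1 :=
  stmt_9_general n (abs_lt.2 ⟨neg_one_lt_zero.trans_le hα0, hα1⟩)
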